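/- Let n > 3 and let (P, ·, {-,-}) be an n-dimensional complex Poisson algebra such that the commutative associative algebra (P,·) is filiform. Then (P, ·, {-,-}) is isomorphic to exactly one of the following five Poisson algebras, given on a basis e₁,…,eₙ with e_i·e_j = e_{i+j} for 2 ≤ i+j ≤ n−1 (i,j ≤ n−1) and all unlisted products zero or determined by (anti)commutativity: P₁,₁ⁿ (no further products); P₁,₂ⁿ: additionally {e₁,eₙ} = eₙ; P₁,₃ⁿ: additionally {e₁,eₙ} = e_{n−1}; P₁,₄ⁿ: additionally eₙ·eₙ = e_{n−1}; P₁,₅ⁿ: additionally eₙ·eₙ = e_{n−1} and {e₁,eₙ} = e_{n−1}. -/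

import Mathlib

open scoped BigOperators

/-- The bilinear map on `Fin n → ℂ` determined by structure constants `c`. -/
noncomputable def sb {n : ℕ} (c : Fin n → Fin n → Fin n → ℂ) :
    (Fin n → ℂ) →ₗ[ℂ] (Fin n → ℂ) →ₗ[ℂ] (Fin n → ℂ) :=
  LinearMap.mk₂ ℂ (fun x y k => ∑ a, ∑ b, c a b k * (x a * y b))
    (fun x x' y => by
      funext k
      simp [add_mul, mul_add, Finset.sum_add_distrib])
    (fun r x y => by
      funext k
      simp only [Pi.smul_apply, smul_eq_mul, Finset.mul_sum]
      exact Finset.sum_congr rfl fun a _ => Finset.sum_congr rfl fun b _ => by ring)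
    (fun x y y' => by
      funext k
      simp [mul_add, Finset.sum_add_distrib])
    (fun r x y => by
      funext k
      simp only [Pi.smul_apply, smul_eq_mul, Finset.mul_sum]
      exact Finset.sum_congr rfl fun a _ => Finset.sum_congr rfl fun b _ => by ring)

/-- `apow m i` is the `i`-th power `P^i` of the algebra `(P, m)`:
`P^1 = P` and `P^(k+1) = span { m a c : a ∈ P^k, c ∈ P }`. -/
noncomputable def apow {P : Type*} [AddCommGroup P] [Module ℂ P]
    (m : P →ₗ[ℂ] P →ₗ[ℂ] P) : ℕ → Submodule ℂ P
  | 0 => ⊤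
  | 1 => ⊤
  | k + 2 => Submodule.span ℂ {z : P | ∃ a, a ∈ apow m (k + 1) ∧ ∃ c : P, z = m a c}

/-- Multiplication of `μ₁,₁ⁿ` / `P₁,₁ⁿ`–`P₁,₃ⁿ`. -/
noncomputable def mu11 (n : ℕ) : (Fin n → ℂ) →ₗ[ℂ] (Fin n → ℂ) →ₗ[ℂ] (Fin n → ℂ) :=
  sb (fun a b k => if (a : ℕ) + (b : ℕ) + 1 = (k : ℕ) ∧ (k : ℕ) + 2 ≤ n then 1 else 0)

/-- Multiplication of `μ₁,₂ⁿ` / `P₁,₄ⁿ`, `P₁,₅ⁿ` (additionally `eₙ·eₙ = e_{n−1}`). -/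
noncomputable def mu12 (n : ℕ) : (Fin n → ℂ) →ₗ[ℂ] (Fin n → ℂ) →ₗ[ℂ] (Fin n → ℂ) :=
  sb (fun a b k =>
    (if (a : ℕ) + (b : ℕ) + 1 = (k : ℕ) ∧ (k : ℕ) + 2 ≤ n then 1 else 0) +
    (if (a : ℕ) + 1 = n ∧ (b : ℕ) + 1 = n ∧ (k : ℕ) + 2 = n then 1 else 0))

/-- The bracket `{e₁,eₙ} = eₙ` of `P₁,₂ⁿ`. -/
noncomputable def brA (n : ℕ) : (Fin n → ℂ) →ₗ[ℂ] (Fin n → ℂ) →ₗ[ℂ] (Fin n → ℂ) :=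
  sb (fun a b k =>
    if (a : ℕ) = 0 ∧ (b : ℕ) + 1 = n ∧ (k : ℕ) + 1 = n then 1
    else if (a : ℕ) + 1 = n ∧ (b : ℕ) = 0 ∧ (k : ℕ) + 1 = n then -1 else 0)

/-- The bracket `{e₁,eₙ} = e_{n−1}` of `P₁,₃ⁿ` and `P₁,₅ⁿ`. -/
noncomputable def brB (n : ℕ) : (Fin n → ℂ) →ₗ[ℂ] (Fin n → ℂ) →ₗ[ℂ] (Fin n → ℂ) :=
  sb (fun a b k =>
    if (a : ℕ) = 0 ∧ (b : ℕ) + 1 = n ∧ (k : ℕ) + 2 = n then 1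
    else if (a : ℕ) + 1 = n ∧ (b : ℕ) = 0 ∧ (k : ℕ) + 2 = n then -1 else 0)

/-- Isomorphism of the double algebra `(P, m, b)` with the double algebra on
`Fin n → ℂ` given by `(m', b')`. -/
def IsoPn (n : ℕ) (P : Type*) [AddCommGroup P] [Module ℂ P]
    (m b : P →ₗ[ℂ] P →ₗ[ℂ] P)
    (m' b' : (Fin n → ℂ) →ₗ[ℂ] (Fin n → ℂ) →ₗ[ℂ] (Fin n → ℂ)) : Prop :=
  ∃ φ : P ≃ₗ[ℂ] (Fin n → ℂ),
    (∀ x y, φ (m x y) = m' (φ x) (φ y)) ∧ (∀ x y, φ (b x y) = b' (φ x) (φ y))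

/-!
The third power of the algebra has codimension one in the second, so some square `u * u` lies
outside it; the powers `u, …, u ^ (n - 1)` are then linearly independent, span a hyperplane
containing all products, and are complemented by some `y` with `u * y = 0`. The kernel of
multiplication by `u` is spanned by `u ^ (n - 1)` and `y`. It contains `y * y` and, by the Leibniz
rule, `{u, y}`, so `y * y = α u ^ (n - 1)` and `{u, y} = β u ^ (n - 1) + γ y`; finally
`{u * y, y} = 0` gives `α γ = 0`.

Replacing `y` by `y + c u ^ (n - 1)` and rescaling `u` and `y` reduces `(α, β, γ)` to five triples.
These are told apart by invariants: `α = 0` iff the annihilator of the multiplication has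
dimension two, `β = γ = 0` iff the bracket vanishes, and `γ = 0` iff all double brackets vanish.
-/

section LeftPow

variable {R P : Type*} [CommSemiring R] [AddCommMonoid P] [Module R P]
  {m br : P →ₗ[R] P →ₗ[R] P}

/-- The power `u ^ (k + 1)` of `u` with respect to the multiplication `m`. The exponent is shifted
because there is no unit. -/
def leftPow (m : P →ₗ[R] P →ₗ[R] P) (u : P) (k : ℕ) : P :=
  (m u ^ k) u

@[simp]
theorem leftPow_zero (m : P →ₗ[R] P →ₗ[R] P) (u : P) : leftPow m u 0 = u :=
  rfl

theorem leftPow_succ (m : P →ₗ[R] P →ₗ[R] P) (u : P) (k : ℕ) :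
    leftPow m u (k + 1) = m u (leftPow m u k) := by
  simp only [leftPow, pow_succ', Module.End.mul_apply]

theorem leftPow_mul (hassoc : ∀ x y z, m (m x y) z = m x (m y z)) (u x : P) (k : ℕ) :
    m (leftPow m u k) x = (m u ^ (k + 1)) x := by
  induction k with
  | zero => simp
  | succ k ih => rw [leftPow_succ, hassoc, ih, ← Module.End.mul_apply, ← pow_succ']

theorem leftPow_mul_leftPow (hassoc : ∀ x y z, m (m x y) z = m x (m y z)) (u : P) (i j : ℕ) :
    m (leftPow m u i) (leftPow m u j) = leftPow m u (i + j + 1) := by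
  rw [leftPow_mul hassoc, leftPow, ← Module.End.mul_apply, ← pow_add, leftPow, add_right_comm]

theorem leftPow_mul_eq_zero (hassoc : ∀ x y z, m (m x y) z = m x (m y z)) {u y : P}
    (huy : m u y = 0) (k : ℕ) : m (leftPow m u k) y = 0 := by
  rw [leftPow_mul hassoc, pow_succ, Module.End.mul_apply, huy, map_zero]

theorem leftPow_smul (s : R) (u : P) (k : ℕ) :
    leftPow m (s • u) k = s ^ (k + 1) • leftPow m u k := by
  simp only [leftPow, map_smul, smul_pow, LinearMap.smul_apply, smul_smul, pow_succ']

theorem leftPow_eq_zero_of_le {u : P} {k l : ℕ} (h : leftPow m u k = 0) (hkl : k ≤ l) :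
    leftPow m u l = 0 :=
  Module.End.pow_map_zero_of_le hkl h

theorem derivation_leftPow_succ_eq_zero {D : P →ₗ[R] P}
    (hD : ∀ x y, D (m x y) = m (D x) y + m x (D y)) {u : P} (huD : m u (D u) = 0)
    (hDu : ∀ k, m (D u) (leftPow m u k) = 0) (k : ℕ) : D (leftPow m u (k + 1)) = 0 := by
  induction k with
  | zero => rw [leftPow_succ, hD, hDu, leftPow_zero, huD, add_zero]
  | succ k ih => rw [leftPow_succ, hD, hDu, ih, map_zero, add_zero]

theorem derivation_leftPow_eq_zero {D : P →ₗ[R] P}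
    (hD : ∀ x y, D (m x y) = m (D x) y + m x (D y)) {u : P} (hDu : D u = 0) :
    ∀ k, D (leftPow m u k) = 0
  | 0 => hDu
  | k + 1 => derivation_leftPow_succ_eq_zero hD (by simp [hDu]) (by simp [hDu]) k

end LeftPow

section Bracket

variable {R P : Type*} [CommRing R] [AddCommGroup P] [Module R P] {m br : P →ₗ[R] P →ₗ[R] P}

theorem bracket_leftPow_leftPow (halt : br.IsAlt)
    (hleib : ∀ x y z, br (m x y) z = m (br x z) y + m x (br y z)) (u : P) (i j : ℕ) :
    br (leftPow m u i) (leftPow m u j) = 0 := by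
  have hpow (z : P) : br u z = 0 → ∀ k, br (leftPow m u k) z = 0 :=
    derivation_leftPow_eq_zero (D := br.flip z) (hleib · · z)
  exact hpow _ (by rw [← halt.neg, hpow u (halt u), neg_zero]) i

theorem mul_mem_of_forall_mul_self_mem [Invertible (2 : R)] (hcomm : ∀ x y, m x y = m y x)
    {S : Submodule R P} (hS : ∀ x, m x x ∈ S) (x y : P) : m x y ∈ S := by
  have hpolar : m x y = (⅟2 : R) • (m (x + y) (x + y) - m x x - m y y) := by
    rw [eq_comm, invOf_smul_eq_iff, two_smul]
    simp only [map_add, LinearMap.add_apply, hcomm y x]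
    abel
  rw [hpolar]
  exact S.smul_mem _ (S.sub_mem (S.sub_mem (hS _) (hS _)) (hS _))

end Bracket

section NormalForm

variable {K P : Type*} [Field K] [AddCommGroup P] [Module K P] {N : ℕ}
  {m br : P →ₗ[K] P →ₗ[K] P} {u y : P} {α β γ : K}

/-- The algebra `(P, m)` is spanned by the nilpotent chain `u, u², …, u ^ (N + 1)` and one further
element `y` killed by `u`. -/
structure IsAdapted (N : ℕ) (m : P →ₗ[K] P →ₗ[K] P) (u y : P) : Prop where
  span_eq_top : Submodule.span K (insert y (Set.range (leftPow m u))) = ⊤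
  leftPow_eq_zero : leftPow m u (N + 1) = 0
  mul_eq_zero : m u y = 0

/-- The normal form of an `(N + 2)`-dimensional Poisson algebra with filiform multiplication:
`y * y = α u ^ (N + 1)` and `{u, y} = β u ^ (N + 1) + γ y`. -/
structure IsNormalForm (N : ℕ) (m br : P →ₗ[K] P →ₗ[K] P) (u y : P) (α β γ : K) : Prop
    extends IsAdapted N m u y where
  mul_self : m y y = α • leftPow m u N
  bracket : br u y = β • leftPow m u N + γ • y

/-- The family `u, u², …, u ^ (N + 1), y`, a basis when `u` and `y` are adapted. -/
def adaptedFamily (N : ℕ) (m : P →ₗ[K] P →ₗ[K] P) (u y : P) : Fin (N + 2) → P :=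
  Fin.snoc (α := fun _ => P) (fun k : Fin (N + 1) => leftPow m u k) y

@[simp]
theorem adaptedFamily_castSucc (k : Fin (N + 1)) :
    adaptedFamily N m u y k.castSucc = leftPow m u k :=
  Fin.snoc_castSucc (α := fun _ => P) ..

@[simp]
theorem adaptedFamily_last : adaptedFamily N m u y (Fin.last (N + 1)) = y :=
  Fin.snoc_last (α := fun _ => P) ..

namespace IsAdapted

theorem span_leftPow_le (h : IsAdapted N m u y) :
    Submodule.span K (Set.range (leftPow m u)) ≤
      Submodule.span K (adaptedFamily N m u y '' {Fin.last (N + 1)}ᶜ) := by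
  rw [Submodule.span_le]
  rintro _ ⟨k, rfl⟩
  by_cases hk : k < N + 1
  · exact Submodule.subset_span
      ⟨Fin.castSucc ⟨k, hk⟩, Fin.castSucc_ne_last _, adaptedFamily_castSucc _⟩
  · rw [leftPow_eq_zero_of_le h.leftPow_eq_zero (not_lt.1 hk)]
    exact Submodule.zero_mem _

theorem top_le_span_adaptedFamily (h : IsAdapted N m u y) :
    ⊤ ≤ Submodule.span K (Set.range (adaptedFamily N m u y)) := by
  rw [← h.span_eq_top, Submodule.span_insert]
  refine sup_le ?_ (h.span_leftPow_le.trans (Submodule.span_mono (Set.image_subset_range _ _)))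
  rw [Submodule.span_singleton_le_iff_mem]
  exact Submodule.subset_span ⟨Fin.last _, adaptedFamily_last⟩

/-- The basis `u, u², …, u ^ (N + 1), y` given by adapted generators. -/
noncomputable def basis (h : IsAdapted N m u y) (hdim : Module.finrank K P = N + 2) :
    Module.Basis (Fin (N + 2)) K P :=
  basisOfTopLeSpanOfCardEqFinrank _ h.top_le_span_adaptedFamily (by simp [hdim])

theorem coe_basis (h : IsAdapted N m u y) (hdim : Module.finrank K P = N + 2) :
    ⇑(h.basis hdim) = adaptedFamily N m u y :=
  coe_basisOfTopLeSpanOfCardEqFinrank ..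

theorem linearIndependent_adaptedFamily (h : IsAdapted N m u y)
    (hdim : Module.finrank K P = N + 2) : LinearIndependent K (adaptedFamily N m u y) :=
  h.coe_basis hdim ▸ (h.basis hdim).linearIndependent

theorem linearIndependent_pair (h : IsAdapted N m u y) (hdim : Module.finrank K P = N + 2) :
    LinearIndependent K ![leftPow m u N, y] := by
  convert (h.linearIndependent_adaptedFamily hdim).comp ![(Fin.last N).castSucc, Fin.last (N + 1)]
    (by simp [Function.Injective, Fin.forall_fin_two, Fin.castSucc_ne_last,
      (Fin.castSucc_ne_last _).symm])
  ext i
  fin_cases i <;> simp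

theorem finrank_span_pair (h : IsAdapted N m u y) (hdim : Module.finrank K P = N + 2) :
    Module.finrank K (Submodule.span K {leftPow m u N, y}) = 2 := by
  rw [← Matrix.range_cons_cons_empty _ _ ![], finrank_span_eq_card (h.linearIndependent_pair hdim),
    Fintype.card_fin]

theorem notMem_span_leftPow (h : IsAdapted N m u y) (hdim : Module.finrank K P = N + 2) :
    y ∉ Submodule.span K (Set.range (leftPow m u)) := by
  intro hy
  refine (h.linearIndependent_adaptedFamily hdim).notMem_span_image
    (Set.notMem_compl_iff.2 rfl : Fin.last (N + 1) ∉ {Fin.last (N + 1)}ᶜ) ?_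
  rw [adaptedFamily_last]
  exact h.span_leftPow_le hy

theorem ker_mul_eq_span_pair (h : IsAdapted N m u y) (hdim : Module.finrank K P = N + 2) :
    LinearMap.ker (m u) = Submodule.span K {leftPow m u N, y} := by
  have : Module.Finite K P := Module.finite_of_finrank_pos (by omega)
  have hle : Submodule.span K {leftPow m u N, y} ≤ LinearMap.ker (m u) := by
    simp [Submodule.span_le, Set.pair_subset_iff, h.mul_eq_zero, ← leftPow_succ, h.leftPow_eq_zero]
  have hrange : N ≤ Module.finrank K (LinearMap.range (m u)) := by
    have hli : LinearIndependent K fun k : Fin N => leftPow m u (k + 1) := by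
      convert (h.linearIndependent_adaptedFamily hdim).comp (fun k : Fin N => k.succ.castSucc)
        fun i j hij => by simpa using hij
      exact (adaptedFamily_castSucc (Fin.succ _)).symm
    calc N = Module.finrank K (Submodule.span K (Set.range fun k : Fin N => leftPow m u (k + 1))) :=
          by simpa using (finrank_span_eq_card hli).symm
      _ ≤ Module.finrank K (LinearMap.range (m u)) :=
          Submodule.finrank_mono <| Submodule.span_le.2 <| by
            rintro _ ⟨k, rfl⟩
            exact ⟨leftPow m u k, (leftPow_succ m u k).symm⟩
  have hrank := (m u).finrank_range_add_finrank_ker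
  refine (Submodule.eq_of_le_of_finrank_le hle ?_).symm
  rw [h.finrank_span_pair hdim]
  omega

theorem mem_ker_mul_iff (h : IsAdapted N m u y) (hdim : Module.finrank K P = N + 2) {x : P} :
    m u x = 0 ↔ ∃ a b : K, a • leftPow m u N + b • y = x := by
  rw [← LinearMap.mem_ker, h.ker_mul_eq_span_pair hdim, Submodule.mem_span_pair]

theorem mul_leftPow_last_eq_zero (h : IsAdapted N m u y)
    (hassoc : ∀ x y z, m (m x y) z = m x (m y z)) : m (leftPow m u N) = 0 := by
  refine LinearMap.ext_on h.span_eq_top ?_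
  rintro _ (rfl | ⟨k, rfl⟩)
  · exact leftPow_mul_eq_zero hassoc h.mul_eq_zero N
  · rw [leftPow_mul_leftPow hassoc]
    exact leftPow_eq_zero_of_le h.leftPow_eq_zero (by omega)

theorem smul_smul (h : IsAdapted N m u y) {s t : K} (hs : s ≠ 0) (ht : t ≠ 0) :
    IsAdapted N m (s • u) (t • y) where
  span_eq_top := by
    rw [← top_le_iff, ← h.span_eq_top, Submodule.span_le]
    rintro _ (rfl | ⟨k, rfl⟩)
    · exact (Submodule.smul_mem_iff _ ht).1 (Submodule.subset_span (Or.inl rfl))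
    · exact (Submodule.smul_mem_iff _ (pow_ne_zero (k + 1) hs)).1
        (Submodule.subset_span (Or.inr ⟨k, leftPow_smul s u k⟩))
  leftPow_eq_zero := by rw [leftPow_smul, h.leftPow_eq_zero, smul_zero]
  mul_eq_zero := by simp [h.mul_eq_zero]

theorem add_smul_leftPow (h : IsAdapted N m u y) (c : K) :
    IsAdapted N m u (y + c • leftPow m u N) where
  span_eq_top := by
    rw [← top_le_iff, ← h.span_eq_top, Submodule.span_insert, Submodule.span_insert]
    refine sup_le ?_ le_sup_right
    rw [Submodule.span_singleton_le_iff_mem]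
    have hpow : c • leftPow m u N ∈ Submodule.span K (Set.range (leftPow m u)) :=
      Submodule.smul_mem _ _ (Submodule.subset_span ⟨N, rfl⟩)
    exact (Submodule.add_mem_iff_left _ (Submodule.mem_sup_right hpow)).1
      (Submodule.mem_sup_left (Submodule.mem_span_singleton_self _))
  leftPow_eq_zero := h.leftPow_eq_zero
  mul_eq_zero := by
    rw [map_add, map_smul, h.mul_eq_zero, ← leftPow_succ, h.leftPow_eq_zero, smul_zero, add_zero]

theorem exists_isNormalForm (h : IsAdapted N m u y) (hdim : Module.finrank K P = N + 2)
    (hassoc : ∀ x y z, m (m x y) z = m x (m y z))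
    (halt : br.IsAlt) (hleib : ∀ x y z, br (m x y) z = m (br x z) y + m x (br y z))
    (hy : m y y ∈ Submodule.span K (Set.range (leftPow m u))) :
    ∃ α β γ, IsNormalForm N m br u y α β γ := by
  have hyy : m u (m y y) = 0 := by
    rw [← hassoc, h.mul_eq_zero, map_zero, LinearMap.zero_apply]
  have huy : m u (br u y) = 0 := by
    have hyu : m u (br y u) = 0 := by
      simpa [h.mul_eq_zero, halt u, eq_comm] using hleib u y u
    rw [← halt.neg, map_neg, hyu, neg_zero]
  obtain ⟨α, δ, hαδ⟩ := (h.mem_ker_mul_iff hdim).1 hyy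
  obtain ⟨β, γ, hβγ⟩ := (h.mem_ker_mul_iff hdim).1 huy
  obtain rfl : δ = 0 := by
    by_contra hδ
    refine h.notMem_span_leftPow hdim ((Submodule.smul_mem_iff _ hδ).1 ?_)
    rw [← hαδ] at hy
    exact (Submodule.add_mem_iff_right _
      (Submodule.smul_mem _ _ (Submodule.subset_span (Set.mem_range_self N)))).1 hy
  exact ⟨α, β, γ, h, (by rw [← hαδ, zero_smul, add_zero]), hβγ.symm⟩

end IsAdapted

namespace IsNormalForm

theorem alpha_mul_gamma_eq_zero (h : IsNormalForm N m br u y α β γ)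
    (hdim : Module.finrank K P = N + 2) (hassoc : ∀ x y z, m (m x y) z = m x (m y z))
    (halt : br.IsAlt) (hleib : ∀ x y z, br (m x y) z = m (br x z) y + m x (br y z)) :
    α * γ = 0 := by
  have hyy : m (br u y) y = 0 := by
    simpa only [h.mul_eq_zero, halt y, map_zero, LinearMap.zero_apply, add_zero, eq_comm]
      using hleib u y y
  rw [h.bracket, map_add, map_smul, map_smul, h.mul_leftPow_last_eq_zero hassoc, smul_zero,
    zero_add, LinearMap.smul_apply, h.mul_self, smul_smul, mul_comm] at hyy
  exact (smul_eq_zero.1 hyy).resolve_right ((h.linearIndependent_pair hdim).ne_zero 0)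

theorem mul_bracket_eq_zero (h : IsNormalForm N m br u y α β γ)
    (hcomm : ∀ x y, m x y = m y x) (hassoc : ∀ x y z, m (m x y) z = m x (m y z)) (k : ℕ) :
    m (br u y) (leftPow m u k) = 0 := by
  simp only [h.bracket, map_add, map_smul, h.mul_leftPow_last_eq_zero hassoc, hcomm y,
    LinearMap.add_apply, LinearMap.smul_apply, leftPow_mul_eq_zero hassoc h.mul_eq_zero,
    LinearMap.zero_apply, smul_zero, add_zero]

theorem bracket_leftPow_succ (h : IsNormalForm N m br u y α β γ)
    (hcomm : ∀ x y, m x y = m y x) (hassoc : ∀ x y z, m (m x y) z = m x (m y z))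
    (hleib : ∀ x y z, br (m x y) z = m (br x z) y + m x (br y z)) (k : ℕ) :
    br (leftPow m u (k + 1)) y = 0 :=
  derivation_leftPow_succ_eq_zero (D := br.flip y) (hleib · · y)
    ((hcomm _ _).trans (h.mul_bracket_eq_zero hcomm hassoc 0))
    (h.mul_bracket_eq_zero hcomm hassoc) k

theorem bracket_mem_span (h : IsNormalForm N m br u y α β γ)
    (hcomm : ∀ x y, m x y = m y x) (hassoc : ∀ x y z, m (m x y) z = m x (m y z))
    (halt : br.IsAlt) (hleib : ∀ x y z, br (m x y) z = m (br x z) y + m x (br y z)) (x z : P) :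
    br x z ∈ Submodule.span K {br u y} := by
  have hpow (k : ℕ) : br (leftPow m u k) y ∈ Submodule.span K {br u y} := by
    cases k with
    | zero => exact Submodule.mem_span_singleton_self _
    | succ k => simp [h.bracket_leftPow_succ hcomm hassoc hleib]
  refine LinearMap.BilinMap.apply_apply_mem_of_mem_span _ _ _ br ?_ x z
    (h.span_eq_top ▸ Submodule.mem_top) (h.span_eq_top ▸ Submodule.mem_top)
  rintro _ (rfl | ⟨i, rfl⟩) _ (rfl | ⟨j, rfl⟩)
  · rw [halt]
    exact Submodule.zero_mem _
  · rw [← neg_mem_iff, halt.neg]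
    exact hpow j
  · exact hpow i
  · rw [bracket_leftPow_leftPow halt hleib]
    exact Submodule.zero_mem _

theorem bracket_eq_zero_iff (h : IsNormalForm N m br u y α β γ)
    (hdim : Module.finrank K P = N + 2)
    (hcomm : ∀ x y, m x y = m y x) (hassoc : ∀ x y z, m (m x y) z = m x (m y z))
    (halt : br.IsAlt) (hleib : ∀ x y z, br (m x y) z = m (br x z) y + m x (br y z)) :
    br = 0 ↔ β = 0 ∧ γ = 0 := by
  constructor
  · rintro rfl
    exact LinearIndependent.pair_iff.1 (h.linearIndependent_pair hdim) β γ h.bracket.symm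
  · rintro ⟨rfl, rfl⟩
    ext x z
    simpa [h.bracket] using h.bracket_mem_span hcomm hassoc halt hleib x z

theorem bracket_leftPow_last_eq_zero (h : IsNormalForm N m br u y α β γ) (hN : N ≠ 0)
    (hcomm : ∀ x y, m x y = m y x) (hassoc : ∀ x y z, m (m x y) z = m x (m y z))
    (halt : br.IsAlt) (hleib : ∀ x y z, br (m x y) z = m (br x z) y + m x (br y z)) :
    br (leftPow m u N) = 0 := by
  refine LinearMap.ext_on h.span_eq_top ?_
  rintro _ (rfl | ⟨k, rfl⟩)
  · obtain ⟨M, rfl⟩ := Nat.exists_eq_succ_of_ne_zero hN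
    exact h.bracket_leftPow_succ hcomm hassoc hleib M
  · exact bracket_leftPow_leftPow halt hleib u N k

theorem bracket_bracket_eq_zero_iff (h : IsNormalForm N m br u y α β γ) (hN : N ≠ 0)
    (hdim : Module.finrank K P = N + 2)
    (hcomm : ∀ x y, m x y = m y x) (hassoc : ∀ x y z, m (m x y) z = m x (m y z))
    (halt : br.IsAlt) (hleib : ∀ x y z, br (m x y) z = m (br x z) y + m x (br y z)) :
    (∀ x y z, br (br x y) z = 0) ↔ γ = 0 := by
  have hlast := h.bracket_leftPow_last_eq_zero hN hcomm hassoc halt hleib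
  constructor
  · intro hnil
    have huyu : γ • br u y = 0 := by
      have hyu := hnil u y u
      rwa [h.bracket, map_add, map_smul, map_smul, hlast, smul_zero, zero_add,
        LinearMap.smul_apply, ← halt.neg, smul_neg, neg_eq_zero] at hyu
    by_contra hγ
    have huy : β • leftPow m u N + γ • y = 0 :=
      h.bracket ▸ (smul_eq_zero.1 huyu).resolve_left hγ
    exact hγ (LinearIndependent.pair_iff.1 (h.linearIndependent_pair hdim) β γ huy).2
  · rintro rfl x y z
    obtain ⟨c, hc⟩ :=
      Submodule.mem_span_singleton.1 (h.bracket_mem_span hcomm hassoc halt hleib x y)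
    simp [← hc, h.bracket, hlast]

theorem finrank_ker_eq_two_iff (h : IsNormalForm N m br u y α β γ)
    (hdim : Module.finrank K P = N + 2)
    (hcomm : ∀ x y, m x y = m y x) (hassoc : ∀ x y z, m (m x y) z = m x (m y z)) :
    Module.finrank K (LinearMap.ker m) = 2 ↔ α = 0 := by
  have : Module.Finite K P := Module.finite_of_finrank_pos (by omega)
  have hle : LinearMap.ker m ≤ Submodule.span K {leftPow m u N, y} := by
    rw [← h.ker_mul_eq_span_pair hdim]
    intro x hx
    rw [LinearMap.mem_ker, hcomm, LinearMap.mem_ker.1 hx, LinearMap.zero_apply]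
  constructor
  · intro hker
    have hy : m y = 0 := by
      rw [← LinearMap.mem_ker,
        Submodule.eq_of_le_of_finrank_eq hle (hker.trans (h.finrank_span_pair hdim).symm)]
      exact Submodule.subset_span (by simp)
    refine (smul_eq_zero.1 (h.mul_self.symm.trans ?_)).resolve_right
      ((h.linearIndependent_pair hdim).ne_zero 0)
    rw [hy, LinearMap.zero_apply]
  · rintro rfl
    have hy : m y = 0 := by
      refine LinearMap.ext_on h.span_eq_top ?_
      rintro _ (rfl | ⟨k, rfl⟩)
      · simpa using h.mul_self
      · rw [hcomm, leftPow_mul_eq_zero hassoc h.mul_eq_zero, LinearMap.zero_apply]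
    rw [hle.antisymm, h.finrank_span_pair hdim]
    simp [Submodule.span_le, Set.pair_subset_iff, hy, h.mul_leftPow_last_eq_zero hassoc]

theorem smul_smul (h : IsNormalForm N m br u y α β γ) {s t : K} (hs : s ≠ 0) (ht : t ≠ 0) :
    IsNormalForm N m br (s • u) (t • y) (t ^ 2 * α / s ^ (N + 1)) (t * β / s ^ N) (s * γ) where
  toIsAdapted := h.toIsAdapted.smul_smul hs ht
  mul_self := by
    simp only [leftPow_smul, map_smul, LinearMap.smul_apply, h.mul_self, _root_.smul_smul]
    congr 1
    field_simp
  bracket := by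
    simp only [leftPow_smul, map_smul, LinearMap.smul_apply, h.bracket, _root_.smul_smul, smul_add]
    congr 2 <;> field_simp
    ring

theorem add_smul_leftPow (h : IsNormalForm N m br u y 0 β γ) (hγ : γ ≠ 0)
    (hcomm : ∀ x y, m x y = m y x) (hassoc : ∀ x y z, m (m x y) z = m x (m y z))
    (halt : br.IsAlt) (hleib : ∀ x y z, br (m x y) z = m (br x z) y + m x (br y z)) :
    IsNormalForm N m br u (y + (β / γ) • leftPow m u N) 0 0 γ where
  toIsAdapted := h.toIsAdapted.add_smul_leftPow _
  mul_self := by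
    simp [h.mul_self, h.mul_leftPow_last_eq_zero hassoc, hcomm y]
  bracket := by
    have hlast : br u (leftPow m u N) = 0 := bracket_leftPow_leftPow halt hleib u 0 N
    rw [map_add, map_smul, hlast, h.bracket, smul_zero, add_zero, zero_smul, zero_add, smul_add,
      _root_.smul_smul, mul_div_cancel₀ _ hγ, add_comm]

end IsNormalForm

/-- The algebra `(P, m, br)` has a normal form with parameters `p = (α, β, γ)`. -/
def HasNormalForm (N : ℕ) (m br : P →ₗ[K] P →ₗ[K] P) (p : K × K × K) : Prop :=
  ∃ u y, IsNormalForm N m br u y p.1 p.2.1 p.2.2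

/-- The parameters `(α, β, γ)` of the algebras `P₁,₁`, `P₁,₂`, `P₁,₃`, `P₁,₄`, `P₁,₅`. -/
def modelParam (K : Type*) [Field K] : Fin 5 → K × K × K :=
  ![(0, 0, 0), (0, 0, 1), (0, 1, 0), (1, 0, 0), (1, 1, 0)]

theorem eq_of_modelParam_zero_iff {i j : Fin 5}
    (hα : (modelParam K i).1 = 0 ↔ (modelParam K j).1 = 0)
    (hβγ : (modelParam K i).2.1 = 0 ∧ (modelParam K i).2.2 = 0 ↔
      (modelParam K j).2.1 = 0 ∧ (modelParam K j).2.2 = 0)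
    (hγ : (modelParam K i).2.2 = 0 ↔ (modelParam K j).2.2 = 0) : i = j := by
  fin_cases i <;> fin_cases j <;> simp_all [modelParam]

theorem eq_of_hasNormalForm_modelParam (hN : N ≠ 0) (hdim : Module.finrank K P = N + 2)
    (hcomm : ∀ x y, m x y = m y x) (hassoc : ∀ x y z, m (m x y) z = m x (m y z))
    (halt : br.IsAlt) (hleib : ∀ x y z, br (m x y) z = m (br x z) y + m x (br y z))
    {i j : Fin 5} (hi : HasNormalForm N m br (modelParam K i))
    (hj : HasNormalForm N m br (modelParam K j)) : i = j := by
  obtain ⟨u, y, hi⟩ := hi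
  obtain ⟨u', y', hj⟩ := hj
  apply eq_of_modelParam_zero_iff (K := K)
  · rw [← hi.finrank_ker_eq_two_iff hdim hcomm hassoc, hj.finrank_ker_eq_two_iff hdim hcomm hassoc]
  · rw [← hi.bracket_eq_zero_iff hdim hcomm hassoc halt hleib,
      hj.bracket_eq_zero_iff hdim hcomm hassoc halt hleib]
  · rw [← hi.bracket_bracket_eq_zero_iff hN hdim hcomm hassoc halt hleib,
      hj.bracket_bracket_eq_zero_iff hN hdim hcomm hassoc halt hleib]

theorem IsNormalForm.hasNormalForm_smul_smul (h : IsNormalForm N m br u y α β γ) {s t : K}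
    (hs : s ≠ 0) (ht : t ≠ 0) :
    HasNormalForm N m br (t ^ 2 * α / s ^ (N + 1), t * β / s ^ N, s * γ) :=
  ⟨s • u, t • y, h.smul_smul hs ht⟩

theorem IsNormalForm.hasNormalForm_one_one_zero [IsAlgClosed K] (hN : 1 < N)
    (h : IsNormalForm N m br u y α β 0) (hα : α ≠ 0) (hβ : β ≠ 0) :
    HasNormalForm N m br (1, 1, 0) := by
  obtain ⟨M, rfl⟩ : ∃ M, N = M + 1 := ⟨N - 1, by omega⟩
  obtain ⟨s, hs⟩ := IsAlgClosed.exists_pow_nat_eq (β ^ 2 / α) (Nat.lt_of_succ_lt_succ hN)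
  have hs₀ : s ≠ 0 := by
    rintro rfl
    rw [zero_pow (by omega)] at hs
    exact div_ne_zero (pow_ne_zero 2 hβ) hα hs.symm
  -- The scalars are chosen so that `t * β = s ^ (M + 1)` and `t ^ 2 * α = s ^ (M + 2)`.
  convert h.hasNormalForm_smul_smul hs₀ (div_ne_zero (pow_ne_zero (M + 1) hs₀) hβ) using 2
  · have hsα : s ^ M * α = β ^ 2 := (eq_div_iff hα).1 hs
    field_simp
    rw [← hsα]
    ring
  · rw [div_mul_cancel₀ _ hβ, div_self (pow_ne_zero _ hs₀), mul_zero]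

theorem IsNormalForm.exists_modelParam [IsAlgClosed K] (h : IsNormalForm N m br u y α β γ)
    (hN : 1 < N) (hdim : Module.finrank K P = N + 2)
    (hcomm : ∀ x y, m x y = m y x) (hassoc : ∀ x y z, m (m x y) z = m x (m y z))
    (halt : br.IsAlt) (hleib : ∀ x y z, br (m x y) z = m (br x z) y + m x (br y z)) :
    ∃ j, HasNormalForm N m br (modelParam K j) := by
  rcases eq_or_ne γ 0 with rfl | hγ
  · rcases eq_or_ne α 0 with rfl | hα <;> rcases eq_or_ne β 0 with rfl | hβ
    · exact ⟨0, u, y, h⟩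
    · exact ⟨2, by
        simpa [modelParam, hβ] using h.hasNormalForm_smul_smul one_ne_zero (inv_ne_zero hβ)⟩
    · obtain ⟨t, ht⟩ := IsAlgClosed.exists_pow_nat_eq α⁻¹ two_pos
      have ht₀ : t ≠ 0 := by
        rintro rfl
        simp [hα, eq_comm] at ht
      exact ⟨3, by simpa [modelParam, hα, ht] using h.hasNormalForm_smul_smul one_ne_zero ht₀⟩
    · exact ⟨4, h.hasNormalForm_one_one_zero hN hα hβ⟩
  · obtain rfl : α = 0 :=
      (mul_eq_zero.1 (h.alpha_mul_gamma_eq_zero hdim hassoc halt hleib)).resolve_right hγ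
    have hshift := h.add_smul_leftPow hγ hcomm hassoc halt hleib
    exact ⟨1, by
      simpa [modelParam, hγ] using hshift.hasNormalForm_smul_smul (inv_ne_zero hγ) one_ne_zero⟩

end NormalForm

section Filiform

theorem le_span_singleton_sup_of_finrank_le {K V : Type*} [DivisionRing K] [AddCommGroup V]
    [Module K V] [FiniteDimensional K V] {S T : Submodule K V} (hST : S ≤ T)
    (hdim : Module.finrank K T ≤ Module.finrank K S + 1) {x : V} (hxT : x ∈ T) (hxS : x ∉ S) :
    T ≤ Submodule.span K {x} ⊔ S := by
  have hlt : S < Submodule.span K {x} ⊔ S := by simpa [right_lt_sup] using hxS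
  have hle : Submodule.span K {x} ⊔ S ≤ T :=
    sup_le ((Submodule.span_singleton_le_iff_mem _ _).2 hxT) hST
  exact (Submodule.eq_of_le_of_finrank_le hle
    (hdim.trans (Submodule.finrank_lt_finrank_of_lt hlt))).ge

variable {P : Type*} [AddCommGroup P] [Module ℂ P] {m br : P →ₗ[ℂ] P →ₗ[ℂ] P} {N : ℕ} {u y : P}

theorem mul_mem_apow {k : ℕ} {a : P} (ha : a ∈ apow m (k + 1)) (c : P) :
    m a c ∈ apow m (k + 2) :=
  Submodule.subset_span ⟨a, ha, c, rfl⟩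

theorem mul_mem_apow_two (x z : P) : m x z ∈ apow m 2 :=
  mul_mem_apow (k := 0) Submodule.mem_top z

theorem apow_succ_le (m : P →ₗ[ℂ] P →ₗ[ℂ] P) : ∀ k, apow m (k + 1) ≤ apow m k
  | 0 => le_rfl
  | 1 => le_top
  | k + 2 => Submodule.span_mono fun _ ⟨a, ha, c, hac⟩ => ⟨a, apow_succ_le m (k + 1) ha, c, hac⟩

theorem pow_mul_mem_apow (hcomm : ∀ x y, m x y = m y x) (u : P) {l : ℕ} {a : P}
    (ha : a ∈ apow m (l + 1)) (k : ℕ) : (m u ^ k) a ∈ apow m (k + l + 1) := by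
  induction k with
  | zero => rwa [Nat.zero_add, pow_zero]
  | succ k ih =>
    rw [pow_succ', Module.End.mul_apply, hcomm, Nat.add_right_comm k 1 l]
    exact mul_mem_apow ih u

theorem leftPow_mem_apow (hcomm : ∀ x y, m x y = m y x) (u : P) (k : ℕ) :
    leftPow m u k ∈ apow m (k + 1) :=
  pow_mul_mem_apow hcomm u (l := 0) Submodule.mem_top k

theorem exists_mul_self_notMem (hcomm : ∀ x y, m x y = m y x) {S : Submodule ℂ P}
    (hS : ¬ apow m 2 ≤ S) : ∃ u, m u u ∉ S := by
  contrapose! hS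
  refine Submodule.span_le.2 ?_
  rintro _ ⟨x, -, y, rfl⟩
  exact mul_mem_of_forall_mul_self_mem hcomm hS x y

theorem apow_le_span_leftPow_sup (hcomm : ∀ x y, m x y = m y x)
    (hassoc : ∀ x y z, m (m x y) z = m x (m y z))
    (hu : apow m 2 ≤ Submodule.span ℂ {m u u} ⊔ apow m 3) :
    ∀ k, apow m (k + 2) ≤ Submodule.span ℂ {leftPow m u (k + 1)} ⊔ apow m (k + 3)
  | 0 => hu
  | k + 1 => by
    refine Submodule.span_le.2 ?_
    rintro _ ⟨a, ha, c, rfl⟩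
    obtain ⟨_, hs, a', ha', rfl⟩ :=
      Submodule.mem_sup.1 (apow_le_span_leftPow_sup hcomm hassoc hu k ha)
    obtain ⟨s, rfl⟩ := Submodule.mem_span_singleton.1 hs
    obtain ⟨_, ht, c', hc', huc⟩ := Submodule.mem_sup.1 (hu (mul_mem_apow_two u c))
    obtain ⟨t, rfl⟩ := Submodule.mem_span_singleton.1 ht
    have hpow : m (leftPow m u (k + 1)) c = t • leftPow m u (k + 2) + (m u ^ (k + 1)) c' := by
      rw [leftPow_mul hassoc, pow_succ, Module.End.mul_apply, ← huc, map_add, map_smul,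
        leftPow, pow_succ _ (k + 1), Module.End.mul_apply]
    rw [map_add, map_smul, LinearMap.add_apply, LinearMap.smul_apply, hpow, smul_add, smul_smul,
      add_assoc (_ • _)]
    exact Submodule.add_mem_sup (Submodule.smul_mem _ _ (Submodule.mem_span_singleton_self _))
      (Submodule.add_mem _ (Submodule.smul_mem _ _ (pow_mul_mem_apow hcomm u (l := 2) hc' (k + 1)))
        (mul_mem_apow ha' c))

theorem apow_two_le_map_span_leftPow (hcomm : ∀ x y, m x y = m y x)
    (hassoc : ∀ x y z, m (m x y) z = m x (m y z))
    (hu : apow m 2 ≤ Submodule.span ℂ {m u u} ⊔ apow m 3) (hnil : apow m (N + 2) = ⊥) :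
    apow m 2 ≤ (Submodule.span ℂ (Set.range (leftPow m u))).map (m u) := by
  suffices h : ∀ k, apow m 2 ≤
      (Submodule.span ℂ (Set.range (leftPow m u))).map (m u) ⊔ apow m (k + 2) by
    simpa [hnil] using h N
  intro k
  induction k with
  | zero => exact le_sup_right
  | succ k ih =>
    refine ih.trans (sup_le le_sup_left ((apow_le_span_leftPow_sup hcomm hassoc hu k).trans
      (sup_le_sup_right ?_ _)))
    rw [Submodule.span_singleton_le_iff_mem]
    exact ⟨leftPow m u k, Submodule.subset_span ⟨k, rfl⟩, (leftPow_succ m u k).symm⟩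

theorem map_mul_span_leftPow_le (m : P →ₗ[ℂ] P →ₗ[ℂ] P) (u : P) :
    (Submodule.span ℂ (Set.range (leftPow m u))).map (m u) ≤
      Submodule.span ℂ (Set.range (leftPow m u)) := by
  rw [Submodule.map_span_le]
  rintro _ ⟨k, rfl⟩
  exact Submodule.subset_span ⟨k + 1, leftPow_succ m u k⟩

theorem finrank_span_leftPow [FiniteDimensional ℂ P] (hu : m u u ∉ apow m 3)
    (hle : apow m 2 ≤ Submodule.span ℂ (Set.range (leftPow m u))) :
    Module.finrank ℂ (Submodule.span ℂ (Set.range (leftPow m u))) =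
      Module.finrank ℂ (apow m 2) + 1 := by
  have hlt : apow m 2 < Submodule.span ℂ (Set.range (leftPow m u)) := by
    refine lt_of_le_not_ge hle fun hge => hu (mul_mem_apow (k := 1) ?_ u)
    exact hge (Submodule.subset_span ⟨0, rfl⟩)
  refine le_antisymm ?_ (Submodule.finrank_lt_finrank_of_lt hlt)
  have hspan : Submodule.span ℂ (Set.range (leftPow m u)) ≤ Submodule.span ℂ {u} ⊔ apow m 2 := by
    rw [Submodule.span_le]
    rintro _ ⟨_ | k, rfl⟩
    · exact Submodule.mem_sup_left (Submodule.mem_span_singleton_self u)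
    · rw [leftPow_succ]
      exact Submodule.mem_sup_right (mul_mem_apow_two u _)
  calc Module.finrank ℂ (Submodule.span ℂ (Set.range (leftPow m u)))
      ≤ Module.finrank ℂ ↥(Submodule.span ℂ {u} ⊔ apow m 2) := Submodule.finrank_mono hspan
    _ ≤ Module.finrank ℂ (Submodule.span ℂ {u}) + Module.finrank ℂ (apow m 2) :=
      Submodule.finrank_add_le_finrank_add_finrank _ _
    _ ≤ Module.finrank ℂ (apow m 2) + 1 := by
      rw [add_comm]
      exact Nat.add_le_add_left (by simpa using finrank_span_le_card (R := ℂ) {u}) _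

theorem exists_isAdapted (hcomm : ∀ x y, m x y = m y x)
    (hassoc : ∀ x y z, m (m x y) z = m x (m y z)) (hdim : Module.finrank ℂ P = N + 2)
    (hdim₂ : Module.finrank ℂ (apow m 2) = N) (hdim₃ : Module.finrank ℂ (apow m 3) + 1 = N)
    (hnil : apow m (N + 2) = ⊥) :
    ∃ u y, IsAdapted N m u y ∧ apow m 2 ≤ Submodule.span ℂ (Set.range (leftPow m u)) := by
  have : FiniteDimensional ℂ P := Module.finite_of_finrank_pos (by omega)
  obtain ⟨u, hu⟩ : ∃ u, m u u ∉ apow m 3 := exists_mul_self_notMem hcomm fun hle => by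
    have := Submodule.finrank_mono hle
    omega
  have hmap := apow_two_le_map_span_leftPow hcomm hassoc
    (le_span_singleton_sup_of_finrank_le (apow_succ_le m 2) (hdim₂.trans_le hdim₃.ge)
      (mul_mem_apow_two u u) hu) hnil
  have hle := hmap.trans (map_mul_span_leftPow_le m u)
  have hW := hdim₂ ▸ finrank_span_leftPow hu hle
  obtain ⟨v, hv⟩ : ∃ v, v ∉ Submodule.span ℂ (Set.range (leftPow m u)) := by
    by_contra! hall
    rw [Submodule.eq_top_iff'.2 hall, finrank_top] at hW
    omega
  obtain ⟨w, hw, huw⟩ := Submodule.mem_map.1 (hmap (mul_mem_apow_two u v))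
  refine ⟨u, v - w, ⟨?_, ?_, ?_⟩, hle⟩
  · rw [← top_le_iff, Submodule.span_insert]
    exact le_span_singleton_sup_of_finrank_le le_top (by rw [finrank_top, hdim, hW])
      Submodule.mem_top fun h => hv ((Submodule.sub_mem_iff_left _ hw).1 h)
  · simpa [hnil] using leftPow_mem_apow hcomm u (N + 1)
  · rw [map_sub, huw, sub_self]

theorem exists_isNormalForm (hcomm : ∀ x y, m x y = m y x)
    (hassoc : ∀ x y z, m (m x y) z = m x (m y z)) (halt : br.IsAlt)
    (hleib : ∀ x y z, br (m x y) z = m (br x z) y + m x (br y z))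
    (hdim : Module.finrank ℂ P = N + 2) (hdim₂ : Module.finrank ℂ (apow m 2) = N)
    (hdim₃ : Module.finrank ℂ (apow m 3) + 1 = N) (hnil : apow m (N + 2) = ⊥) :
    ∃ u y α β γ, IsNormalForm N m br u y α β γ := by
  obtain ⟨u, y, h, hle⟩ := exists_isAdapted hcomm hassoc hdim hdim₂ hdim₃ hnil
  exact ⟨u, y, h.exists_isNormalForm hdim hassoc halt hleib (hle (mul_mem_apow_two y y))⟩

end Filiform

section Models

theorem sb_single_single {n : ℕ} (c : Fin n → Fin n → Fin n → ℂ) (i j : Fin n) :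
    sb c (Pi.single i 1) (Pi.single j 1) = c i j := by
  ext k
  simp [sb, Pi.single_apply]

variable {P : Type*} [AddCommGroup P] [Module ℂ P] {m br : P →ₗ[ℂ] P →ₗ[ℂ] P} {n N : ℕ}

theorem equivFun_mul_eq_sb_iff (b : Module.Basis (Fin n) ℂ P) (c : Fin n → Fin n → Fin n → ℂ) :
    (∀ x y, b.equivFun (m x y) = sb c (b.equivFun x) (b.equivFun y)) ↔
      ∀ i j, m (b i) (b j) = ∑ k, c i j k • b k := by
  have hsb (i j : Fin n) : sb c (b.equivFun (b i)) (b.equivFun (b j)) = c i j := by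
    have hsingle (k : Fin n) : b.equivFun (b k) = Pi.single k 1 := by
      ext l
      rw [b.equivFun_self, Pi.single_apply]
      simp only [eq_comm]
    rw [hsingle, hsingle, sb_single_single]
  constructor
  · intro h i j
    rw [← b.equivFun_symm_apply, LinearEquiv.eq_symm_apply, h, hsb]
  · intro h
    have hext : m.compr₂ b.equivFun.toLinearMap =
        (sb c).compl₁₂ b.equivFun.toLinearMap b.equivFun.toLinearMap := by
      refine LinearMap.ext_basis b b fun i j => ?_
      simp only [LinearMap.compr₂_apply, LinearMap.compl₁₂_apply, LinearEquiv.coe_coe, hsb, h,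
        ← b.equivFun_symm_apply, LinearEquiv.apply_symm_apply]
    exact fun x y => LinearMap.congr_fun₂ hext x y

theorem isoPn_sb_iff {c d : Fin n → Fin n → Fin n → ℂ} :
    IsoPn n P m br (sb c) (sb d) ↔ ∃ b : Module.Basis (Fin n) ℂ P,
      (∀ i j, m (b i) (b j) = ∑ k, c i j k • b k) ∧
        ∀ i j, br (b i) (b j) = ∑ k, d i j k • b k := by
  constructor
  · rintro ⟨φ, hm, hbr⟩
    exact ⟨.ofEquivFun φ, (equivFun_mul_eq_sb_iff _ c).1 (by simpa using hm),
      (equivFun_mul_eq_sb_iff _ d).1 (by simpa using hbr)⟩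
  · rintro ⟨b, hm, hbr⟩
    exact ⟨b.equivFun, (equivFun_mul_eq_sb_iff b c).2 hm, (equivFun_mul_eq_sb_iff b d).2 hbr⟩

/-- The structure constants of the multiplication with `e_i * e_j = e_{i+j}` for `i + j ≤ n - 1`
and `e_n * e_n = α e_{n-1}`; the indices are shifted by one. -/
def mulCoeff (n : ℕ) (α : ℂ) (i j k : Fin n) : ℂ :=
  (if (i : ℕ) + j + 1 = k ∧ (k : ℕ) + 2 ≤ n then 1 else 0) +
    if (i : ℕ) + 1 = n ∧ (j : ℕ) + 1 = n ∧ (k : ℕ) + 2 = n then α else 0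

/-- The structure constants of the bracket with `{e_1, e_n} = β e_{n-1} + γ e_n`; the indices are
shifted by one. -/
def bracketCoeff (n : ℕ) (β γ : ℂ) (i j k : Fin n) : ℂ :=
  let v : ℂ := if (k : ℕ) + 2 = n then β else if (k : ℕ) + 1 = n then γ else 0
  if (i : ℕ) = 0 ∧ (j : ℕ) + 1 = n then v
  else if (i : ℕ) + 1 = n ∧ (j : ℕ) = 0 then -v
  else 0

theorem mu11_eq_sb (n : ℕ) : mu11 n = sb (mulCoeff n 0) := by
  rw [mu11]
  congr! 4 with i j k
  rw [mulCoeff, ite_self, add_zero]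

theorem mu12_eq_sb (n : ℕ) : mu12 n = sb (mulCoeff n 1) :=
  rfl

theorem zero_eq_sb (n : ℕ) : 0 = sb (bracketCoeff n 0 0) := by
  ext
  simp [sb, bracketCoeff]

theorem brA_eq_sb (n : ℕ) : brA n = sb (bracketCoeff n 0 1) := by
  rw [brA]
  congr! 4 with i j k
  grind [bracketCoeff]

theorem brB_eq_sb (n : ℕ) : brB n = sb (bracketCoeff n 1 0) := by
  rw [brB]
  congr! 4 with i j k
  grind [bracketCoeff]

variable (f : Fin (N + 2) → P) (α β γ : ℂ)

theorem sum_mulCoeff_of_lt {i j : Fin (N + 2)} (h : (i : ℕ) + j + 1 < N + 1) :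
    ∑ k, mulCoeff (N + 2) α i j k • f k = f (Fin.castSucc ⟨i + j + 1, h⟩) := by
  rw [Finset.sum_eq_single (Fin.castSucc ⟨i + j + 1, h⟩) (fun k _ hk => ?_) (by simp)]
  · rw [mulCoeff, if_pos (by grind), if_neg (by grind), add_zero, one_smul]
  · rw [mulCoeff, if_neg (by grind), if_neg (by omega), add_zero, zero_smul]

theorem sum_mulCoeff_eq_zero {i j : Fin (N + 2)} (h : N + 1 ≤ (i : ℕ) + j + 1)
    (hlast : ¬ (i = Fin.last (N + 1) ∧ j = Fin.last (N + 1))) :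
    ∑ k, mulCoeff (N + 2) α i j k • f k = 0 := by
  refine Finset.sum_eq_zero fun k _ => ?_
  rw [mulCoeff, if_neg (by omega), if_neg (by grind), add_zero, zero_smul]

theorem sum_mulCoeff_last_last :
    ∑ k, mulCoeff (N + 2) α (Fin.last _) (Fin.last _) k • f k = α • f (Fin.last N).castSucc := by
  rw [Finset.sum_eq_single (Fin.last N).castSucc (fun k _ hk => ?_) (by simp)]
  · rw [mulCoeff, if_neg (by grind), if_pos (by simp), zero_add]
  · rw [mulCoeff, if_neg (by grind), if_neg (by grind), add_zero, zero_smul]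

theorem sum_bracketCoeff_zero_last :
    ∑ k, bracketCoeff (N + 2) β γ 0 (Fin.last _) k • f k =
      β • f (Fin.last N).castSucc + γ • f (Fin.last _) := by
  rw [Finset.sum_eq_add (Fin.last N).castSucc (Fin.last (N + 1)) (Fin.castSucc_ne_last _)
    (fun k _ hk => ?_) (by simp) (by simp)]
  · simp [bracketCoeff]
  · have : (k : ℕ) ≠ N ∧ (k : ℕ) ≠ N + 1 := by grind
    simp [bracketCoeff, this]

theorem bracketCoeff_swap (i j k : Fin (N + 2)) :
    bracketCoeff (N + 2) β γ j i k = -bracketCoeff (N + 2) β γ i j k := by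
  grind [bracketCoeff]

theorem bracketCoeff_eq_zero {i j : Fin (N + 2)} (hij : ¬ (i = 0 ∧ j = Fin.last (N + 1)))
    (hji : ¬ (j = 0 ∧ i = Fin.last (N + 1))) (k : Fin (N + 2)) :
    bracketCoeff (N + 2) β γ i j k = 0 := by
  rw [bracketCoeff, if_neg (by grind), if_neg (by grind)]

variable {f α β γ}

theorem leftPow_eq_of_mul_eq_sum (hm : ∀ i j, m (f i) (f j) = ∑ k, mulCoeff (N + 2) α i j k • f k)
    (k : ℕ) (hk : k < N + 1) : leftPow m (f 0) k = f (Fin.castSucc ⟨k, hk⟩) := by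
  induction k with
  | zero => rfl
  | succ k ih =>
    rw [leftPow_succ, ih (by omega), hm, sum_mulCoeff_of_lt _ _ (by simpa using hk)]
    simp

theorem isNormalForm_of_basis (b : Module.Basis (Fin (N + 2)) ℂ P)
    (hm : ∀ i j, m (b i) (b j) = ∑ k, mulCoeff (N + 2) α i j k • b k)
    (hbr : ∀ i j, br (b i) (b j) = ∑ k, bracketCoeff (N + 2) β γ i j k • b k) :
    IsNormalForm N m br (b 0) (b (Fin.last _)) α β γ where
  span_eq_top := by
    rw [← top_le_iff, ← b.span_eq, Submodule.span_le]
    rintro _ ⟨i, rfl⟩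
    refine Submodule.subset_span ?_
    induction i using Fin.lastCases with
    | last => exact Or.inl rfl
    | cast k => exact Or.inr ⟨k, leftPow_eq_of_mul_eq_sum hm k k.2⟩
  leftPow_eq_zero := by
    rw [leftPow_succ, leftPow_eq_of_mul_eq_sum hm N N.lt_succ_self, hm,
      sum_mulCoeff_eq_zero] <;> simp [Fin.ext_iff]
  mul_eq_zero := by
    rw [hm, sum_mulCoeff_eq_zero] <;> simp [Fin.ext_iff]
  mul_self := by
    rw [hm, sum_mulCoeff_last_last, leftPow_eq_of_mul_eq_sum hm N N.lt_succ_self]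
    rfl
  bracket := by
    rw [hbr, sum_bracketCoeff_zero_last, leftPow_eq_of_mul_eq_sum hm N N.lt_succ_self]
    rfl

variable {u y : P}

theorem IsNormalForm.mul_adaptedFamily (h : IsNormalForm N m br u y α β γ)
    (hcomm : ∀ x y, m x y = m y x) (hassoc : ∀ x y z, m (m x y) z = m x (m y z))
    (i j : Fin (N + 2)) :
    m (adaptedFamily N m u y i) (adaptedFamily N m u y j) =
      ∑ k, mulCoeff (N + 2) α i j k • adaptedFamily N m u y k := by
  induction i using Fin.lastCases with
  | last =>
    induction j using Fin.lastCases with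
    | last => simp [sum_mulCoeff_last_last, h.mul_self]
    | cast j =>
      rw [sum_mulCoeff_eq_zero _ _ (by grind) (by simp [Fin.castSucc_ne_last]), hcomm]
      simp [leftPow_mul_eq_zero hassoc h.mul_eq_zero]
  | cast i =>
    induction j using Fin.lastCases with
    | last =>
      rw [sum_mulCoeff_eq_zero _ _ (by grind) (by simp [Fin.castSucc_ne_last])]
      simp [leftPow_mul_eq_zero hassoc h.mul_eq_zero]
    | cast j =>
      rw [adaptedFamily_castSucc, adaptedFamily_castSucc, leftPow_mul_leftPow hassoc]
      by_cases hij : (i : ℕ) + j + 1 < N + 1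
      · rw [sum_mulCoeff_of_lt _ _ hij, adaptedFamily_castSucc]
        rfl
      · rw [sum_mulCoeff_eq_zero _ _ (not_lt.1 hij) (by simp [Fin.castSucc_ne_last]),
          leftPow_eq_zero_of_le h.leftPow_eq_zero (not_lt.1 hij)]

theorem IsNormalForm.bracket_adaptedFamily (h : IsNormalForm N m br u y α β γ)
    (hcomm : ∀ x y, m x y = m y x) (hassoc : ∀ x y z, m (m x y) z = m x (m y z))
    (halt : br.IsAlt) (hleib : ∀ x y z, br (m x y) z = m (br x z) y + m x (br y z))
    (i j : Fin (N + 2)) :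
    br (adaptedFamily N m u y i) (adaptedFamily N m u y j) =
      ∑ k, bracketCoeff (N + 2) β γ i j k • adaptedFamily N m u y k := by
  have hcast (i : Fin (N + 1)) : br (adaptedFamily N m u y i.castSucc) y =
      ∑ k, bracketCoeff (N + 2) β γ i.castSucc (Fin.last _) k • adaptedFamily N m u y k := by
    rw [adaptedFamily_castSucc]
    induction i using Fin.cases with
    | zero => simp [sum_bracketCoeff_zero_last, h.bracket]
    | succ i =>
      simp [bracketCoeff_eq_zero, Fin.ext_iff, h.bracket_leftPow_succ hcomm hassoc hleib]
  induction i using Fin.lastCases with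
  | last =>
    induction j using Fin.lastCases with
    | last => simp [bracketCoeff_eq_zero, Fin.ext_iff, halt y]
    | cast j =>
      rw [adaptedFamily_last, ← halt.neg, hcast]
      simp only [bracketCoeff_swap _ _ _ (Fin.last _), neg_smul, Finset.sum_neg_distrib]
  | cast i =>
    induction j using Fin.lastCases with
    | last => rw [adaptedFamily_last, hcast]
    | cast j =>
      simp [bracketCoeff_eq_zero, Fin.castSucc_ne_last, bracket_leftPow_leftPow halt hleib]

theorem isoPn_iff_hasNormalForm (hdim : Module.finrank ℂ P = N + 2)
    (hcomm : ∀ x y, m x y = m y x) (hassoc : ∀ x y z, m (m x y) z = m x (m y z))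
    (halt : br.IsAlt) (hleib : ∀ x y z, br (m x y) z = m (br x z) y + m x (br y z)) :
    IsoPn (N + 2) P m br (sb (mulCoeff (N + 2) α)) (sb (bracketCoeff (N + 2) β γ)) ↔
      HasNormalForm N m br (α, β, γ) := by
  rw [isoPn_sb_iff]
  constructor
  · rintro ⟨b, hm, hbr⟩
    exact ⟨_, _, isNormalForm_of_basis b hm hbr⟩
  · rintro ⟨u, y, h⟩
    refine ⟨h.basis hdim, ?_⟩
    rw [h.coe_basis hdim]
    exact ⟨h.mul_adaptedFamily hcomm hassoc, h.bracket_adaptedFamily hcomm hassoc halt hleib⟩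

end Models

/-- For n > 3, an n-dimensional complex Poisson algebra whose associative part
is filiform is isomorphic to exactly one of `P₁,₁ⁿ`, `P₁,₂ⁿ`, `P₁,₃ⁿ`, `P₁,₄ⁿ`,
`P₁,₅ⁿ`. -/
theorem stmt9 (n : ℕ) (hn : 3 < n) (P : Type*) [AddCommGroup P] [Module ℂ P]
    (m br : P →ₗ[ℂ] P →ₗ[ℂ] P)
    (hcomm : ∀ x y, m x y = m y x)
    (hassoc : ∀ x y z, m (m x y) z = m x (m y z))
    (hanti : ∀ x y, br x y = - br y x)
    (hjac : ∀ x y z, br (br x y) z + br (br y z) x + br (br z x) y = 0)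
    (hleib : ∀ x y z, br (m x y) z = m (br x z) y + m x (br y z))
    (hdim : Module.finrank ℂ P = n)
    (hfil : ∀ i : ℕ, 2 ≤ i → i ≤ n → Module.finrank ℂ ↥(apow m i) = n - i) :
    ∃! j : Fin 5,
      ![IsoPn n P m br (mu11 n) 0,
        IsoPn n P m br (mu11 n) (brA n),
        IsoPn n P m br (mu11 n) (brB n),
        IsoPn n P m br (mu12 n) 0,
        IsoPn n P m br (mu12 n) (brB n)] j := by
  obtain ⟨N, rfl⟩ := Nat.exists_eq_add_of_le' (show 2 ≤ n by omega)
  have hN : 1 < N := by omega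
  have htf : IsAddTorsionFree P := .of_isTorsionFree ℂ P
  have halt : br.IsAlt := fun x => self_eq_neg.1 (hanti x x)
  have : FiniteDimensional ℂ P := Module.finite_of_finrank_pos (by omega)
  obtain ⟨u, y, α, β, γ, h⟩ : ∃ u y α β γ, IsNormalForm N m br u y α β γ :=
    exists_isNormalForm hcomm hassoc halt hleib hdim (hfil 2 le_rfl (by omega))
      (by rw [hfil 3] <;> omega) (Submodule.finrank_eq_zero.1 (by simp [hfil]))
  have hmodel : ∃! j, HasNormalForm N m br (modelParam ℂ j) := existsUnique_of_exists_of_unique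
    (h.exists_modelParam hN hdim hcomm hassoc halt hleib)
    fun _ _ => eq_of_hasNormalForm_modelParam (by omega) hdim hcomm hassoc halt hleib
  simp only [mu11_eq_sb, mu12_eq_sb, brA_eq_sb, brB_eq_sb, zero_eq_sb,
    isoPn_iff_hasNormalForm hdim hcomm hassoc halt hleib]
  convert hmodel using 2 with j
  fin_cases j <;> rfl
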